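/- The constants in the two-sided comparison of φ̃ᶜ_{𝔹ⁿ} with T on the unit ball are sharp: for every c > 0 and every ε > 0 there exist distinct points x, y ∈ 𝔹ⁿ with |x−y|/(|x−y| + c(2 − |x| − |y|)) < (min{1/(2c), 1/(1+c)} + ε)·T(x,y), and there exist distinct points x', y' ∈ 𝔹ⁿ with |x'−y'|/(|x'−y'| + c(2 − |x'| − |y'|)) > (max{1, 1/c} − ε)·T(x',y'). -/

import Mathlib

/-!
Restrict to a diameter: for a unit vector `e` and `a, b ∈ (-1, 1)` one has
`|a - b| ^ 2 + (1 - a ^ 2) * (1 - b ^ 2) = (1 - a * b) ^ 2`, so for `a ≠ b` the quotient `φ̃ᶜ / T`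
at the points `a • e`, `b • e` equals `(1 - a * b) / (|a - b| + c * (2 - |a| - |b|))`. This
expression is continuous on the closed square `[-1, 1]²` away from `(1, 1)` and `(-1, -1)`, and the
off-diagonal part of the open square is dense in the closed one, so all its values there are limits
of values of `φ̃ᶜ / T`. The constants `1 / (2 * c)`, `1 / (1 + c)` and `1` are its values at
`(0, 0)`, `(0, 1)` and `(-1, 1)`, and `1 / c` is its limit along the diagonal at the singular corner
`(1, 1)`.
-/

open Set Filter Topology Metric

section OffDiag

variable {X : Type*} [TopologicalSpace X] [∀ x : X, NeBot (𝓝[≠] x)]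

theorem dense_compl_diagonal : Dense (diagonal X)ᶜ := fun p ↦
  (Continuous.prodMk_right p.1).continuousWithinAt.mem_closure
    (dense_compl_singleton p.1 p.2) fun _ hy ↦ Ne.symm hy

theorem closure_offDiag_of_isOpen {s : Set X} (hs : IsOpen s) :
    closure s.offDiag = closure s ×ˢ closure s := by
  rw [← closure_prod_eq, ← prod_sdiff_diagonal, sdiff_eq]
  exact (closure_mono inter_subset_left).antisymm <|
    closure_minimal (dense_compl_diagonal.open_subset_closure_inter (hs.prod hs)) isClosed_closure

end OffDiag

/-- The function `φ̃ᶜ` of the unit ball, with `1 - ‖x‖` as the distance from `x` to the boundary. -/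
noncomputable def phiTilde {E : Type*} [NormedAddCommGroup E] (c : ℝ) (x y : E) : ℝ :=
  dist x y / (dist x y + c * (2 - ‖x‖ - ‖y‖))

/-- The quantity `T = th (ρ / 2)`, where `ρ` is the hyperbolic metric of the unit ball, given by its
algebraic expression, which makes sense in any normed space. -/
noncomputable def tanhHalfRho {E : Type*} [NormedAddCommGroup E] (x y : E) : ℝ :=
  dist x y / √(dist x y ^ 2 + (1 - ‖x‖ ^ 2) * (1 - ‖y‖ ^ 2))

/-- The set of values of `φ̃ᶜ / T` at pairs of distinct points of the unit ball. A constant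
bounding `φ̃ᶜ / T` from above or below is sharp when it lies in the closure of this set. -/
def ratioSet (E : Type*) [NormedAddCommGroup E] (c : ℝ) : Set ℝ :=
  (fun p : E × E ↦ phiTilde c p.1 p.2 / tanhHalfRho p.1 p.2) '' (ball (0 : E) 1).offDiag

/-- The value of `φ̃ᶜ / T` at two points of a diameter with signed distances `a` and `b` to the
centre. -/
noncomputable def diameterRatio (c a b : ℝ) : ℝ :=
  (1 - a * b) / (|a - b| + c * (2 - |a| - |b|))

section RatioSet

variable {E : Type*} [NormedAddCommGroup E] {c k K : ℝ}

theorem tanhHalfRho_pos {x y : E} (hx : ‖x‖ < 1) (hy : ‖y‖ < 1) (hxy : x ≠ y) :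
    0 < tanhHalfRho x y := by
  have hd : 0 < dist x y := dist_pos.2 hxy
  have hx' : 0 < 1 - ‖x‖ ^ 2 := sub_pos.2 (pow_lt_one₀ (norm_nonneg x) hx two_ne_zero)
  have hy' : 0 < 1 - ‖y‖ ^ 2 := sub_pos.2 (pow_lt_one₀ (norm_nonneg y) hy two_ne_zero)
  unfold tanhHalfRho
  positivity

theorem exists_phiTilde_lt (hk : k ∈ closure (ratioSet E c)) (hkK : k < K) :
    ∃ x y : E, ‖x‖ < 1 ∧ ‖y‖ < 1 ∧ x ≠ y ∧ phiTilde c x y < K * tanhHalfRho x y := by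
  obtain ⟨_, hlt, ⟨x, y⟩, ⟨hx, hy, hxy⟩, rfl⟩ := mem_closure_iff.1 hk (Iio K) isOpen_Iio hkK
  rw [mem_ball_zero_iff] at hx hy
  exact ⟨x, y, hx, hy, hxy, (div_lt_iff₀ (tanhHalfRho_pos hx hy hxy)).1 hlt⟩

theorem exists_lt_phiTilde (hk : k ∈ closure (ratioSet E c)) (hKk : K < k) :
    ∃ x y : E, ‖x‖ < 1 ∧ ‖y‖ < 1 ∧ x ≠ y ∧ K * tanhHalfRho x y < phiTilde c x y := by
  obtain ⟨_, hlt, ⟨x, y⟩, ⟨hx, hy, hxy⟩, rfl⟩ := mem_closure_iff.1 hk (Ioi K) isOpen_Ioi hKk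
  rw [mem_ball_zero_iff] at hx hy
  exact ⟨x, y, hx, hy, hxy, (lt_div_iff₀ (tanhHalfRho_pos hx hy hxy)).1 hlt⟩

end RatioSet

section Diameter

variable {E : Type*} [NormedAddCommGroup E] [NormedSpace ℝ E] {c a b : ℝ}

theorem norm_smul_of_norm_eq_one {e : E} (he : ‖e‖ = 1) (a : ℝ) : ‖a • e‖ = |a| := by
  rw [norm_smul, he, mul_one, Real.norm_eq_abs]

theorem dist_smul_of_norm_eq_one {e : E} (he : ‖e‖ = 1) (a b : ℝ) :
    dist (a • e) (b • e) = |a - b| := by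
  rw [dist_eq_norm, ← sub_smul, norm_smul_of_norm_eq_one he]

theorem phiTilde_div_tanhHalfRho_smul {e : E} (he : ‖e‖ = 1) (ha : |a| ≤ 1) (hb : |b| ≤ 1)
    (hab : a ≠ b) :
    phiTilde c (a • e) (b • e) / tanhHalfRho (a • e) (b • e) = diameterRatio c a b := by
  have h_one_sub : 0 ≤ 1 - a * b := by
    rw [sub_nonneg]
    calc a * b ≤ |a * b| := le_abs_self _
      _ = |a| * |b| := abs_mul a b
      _ ≤ 1 := mul_le_one₀ ha (abs_nonneg b) hb
  have h_sqrt : √(|a - b| ^ 2 + (1 - |a| ^ 2) * (1 - |b| ^ 2)) = 1 - a * b := by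
    rw [sq_abs, sq_abs, sq_abs, ← Real.sqrt_sq h_one_sub]
    congr 1
    ring
  simp only [phiTilde, tanhHalfRho, diameterRatio, norm_smul_of_norm_eq_one he,
    dist_smul_of_norm_eq_one he, h_sqrt]
  exact div_div_div_cancel_left' _ _ (abs_ne_zero.2 (sub_ne_zero.2 hab))

theorem diameterRatio_mem_ratioSet [Nontrivial E] (ha : |a| < 1) (hb : |b| < 1) (hab : a ≠ b) :
    diameterRatio c a b ∈ ratioSet E c := by
  obtain ⟨e, he⟩ := exists_norm_eq E zero_le_one
  refine ⟨(a • e, b • e), ⟨?_, ?_, ?_⟩, phiTilde_div_tanhHalfRho_smul he ha.le hb.le hab⟩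
  · rwa [mem_ball_zero_iff, norm_smul_of_norm_eq_one he]
  · rwa [mem_ball_zero_iff, norm_smul_of_norm_eq_one he]
  · rwa [← dist_pos, dist_smul_of_norm_eq_one he, abs_pos, sub_ne_zero]

theorem diameterRatio_mem_closure_ratioSet [Nontrivial E] (ha : |a| ≤ 1) (hb : |b| ≤ 1)
    (h : |a - b| + c * (2 - |a| - |b|) ≠ 0) : diameterRatio c a b ∈ closure (ratioSet E c) := by
  have h_cont : ContinuousAt (fun p : ℝ × ℝ ↦ diameterRatio c p.1 p.2) (a, b) :=
    ContinuousAt.div (by fun_prop) (by fun_prop) h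
  have h_mem : (a, b) ∈ closure (Ioo (-1 : ℝ) 1).offDiag := by
    rw [closure_offDiag_of_isOpen isOpen_Ioo, closure_Ioo (by norm_num)]
    exact ⟨abs_le.1 ha, abs_le.1 hb⟩
  exact h_cont.continuousWithinAt.mem_closure h_mem fun p hp ↦
    diameterRatio_mem_ratioSet (abs_lt.2 hp.1) (abs_lt.2 hp.2.1) hp.2.2

end Diameter

section SharpConstants

variable (E : Type*) [NormedAddCommGroup E] [NormedSpace ℝ E] [Nontrivial E] {c : ℝ}

theorem one_div_two_mul_mem_closure_ratioSet (hc : c ≠ 0) :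
    1 / (2 * c) ∈ closure (ratioSet E c) := by
  have h : diameterRatio c 0 0 = 1 / (2 * c) := by simp [diameterRatio, mul_comm]
  rw [← h]
  exact diameterRatio_mem_closure_ratioSet (by simp) (by simp) (by simpa using hc)

theorem one_div_one_add_mem_closure_ratioSet (hc : 1 + c ≠ 0) :
    1 / (1 + c) ∈ closure (ratioSet E c) := by
  have h_den : |(0 : ℝ) - 1| + c * (2 - |0| - |1|) = 1 + c := by norm_num
  have h : diameterRatio c 0 1 = 1 / (1 + c) := by rw [diameterRatio, h_den, zero_mul, sub_zero]
  rw [← h]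
  exact diameterRatio_mem_closure_ratioSet (by simp) (by simp) (h_den.trans_ne hc)

theorem one_mem_closure_ratioSet : 1 ∈ closure (ratioSet E c) := by
  have h_den : |(-1 : ℝ) - 1| + c * (2 - |-1| - |1|) = 2 := by norm_num
  have h : diameterRatio c (-1) 1 = 1 := by rw [diameterRatio, h_den]; norm_num
  rw [← h]
  exact diameterRatio_mem_closure_ratioSet (by simp) (by simp) (h_den.trans_ne two_ne_zero)

theorem one_add_div_mem_closure_ratioSet (hc : c ≠ 0) {s : ℝ} (hs : s ∈ Ico 0 1) :
    (1 + s) / (2 * c) ∈ closure (ratioSet E c) := by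
  have hs_abs : |s| = s := abs_of_nonneg hs.1
  have hs_sub : 1 - s ≠ 0 := (sub_pos.2 hs.2).ne'
  have h_den : |s - s| + c * (2 - |s| - |s|) = 2 * c * (1 - s) := by
    rw [sub_self, abs_zero, hs_abs]
    ring
  have h : diameterRatio c s s = (1 + s) / (2 * c) := by
    rw [diameterRatio, h_den, ← mul_div_mul_right (1 + s) (2 * c) hs_sub]
    ring
  rw [← h]
  refine diameterRatio_mem_closure_ratioSet (hs_abs.trans_le hs.2.le) (hs_abs.trans_le hs.2.le) ?_
  rw [h_den]
  exact mul_ne_zero (mul_ne_zero two_ne_zero hc) hs_sub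

theorem one_div_mem_closure_ratioSet (hc : c ≠ 0) : 1 / c ∈ closure (ratioSet E c) := by
  have h_one : (1 : ℝ) ∈ closure (Ico 0 1) := by
    rw [closure_Ico zero_ne_one]
    exact right_mem_Icc.2 zero_le_one
  have h_lim : (1 + 1) / (2 * c) ∈ closure (closure (ratioSet E c)) :=
    map_mem_closure (f := fun s ↦ (1 + s) / (2 * c)) (by fun_prop) h_one fun _ ↦
      one_add_div_mem_closure_ratioSet E hc
  rwa [closure_closure, one_add_one_eq_two, ← div_div, div_self two_ne_zero] at h_lim

theorem min_mem_closure_ratioSet (hc : 0 < c) :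
    min (1 / (2 * c)) (1 / (1 + c)) ∈ closure (ratioSet E c) :=
  min_rec' (· ∈ closure (ratioSet E c)) (one_div_two_mul_mem_closure_ratioSet E hc.ne')
    (one_div_one_add_mem_closure_ratioSet E (by positivity))

theorem max_mem_closure_ratioSet (hc : c ≠ 0) : max 1 (1 / c) ∈ closure (ratioSet E c) :=
  max_rec' (· ∈ closure (ratioSet E c)) (one_mem_closure_ratioSet E)
    (one_div_mem_closure_ratioSet E hc)

theorem stmt14_general (hc : 0 < c) {ε : ℝ} (hε : 0 < ε) :
    (∃ x y : E, ‖x‖ < 1 ∧ ‖y‖ < 1 ∧ x ≠ y ∧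
      phiTilde c x y < (min (1 / (2 * c)) (1 / (1 + c)) + ε) * tanhHalfRho x y) ∧
    (∃ x y : E, ‖x‖ < 1 ∧ ‖y‖ < 1 ∧ x ≠ y ∧
      phiTilde c x y > (max 1 (1 / c) - ε) * tanhHalfRho x y) :=
  ⟨exists_phiTilde_lt (min_mem_closure_ratioSet E hc) (lt_add_of_pos_right _ hε),
    exists_lt_phiTilde (max_mem_closure_ratioSet E hc.ne') (sub_lt_self _ hε)⟩

end SharpConstants

theorem stmt14 (n : ℕ) (hn : 2 ≤ n) (c : ℝ) (hc : 0 < c) (ε : ℝ) (hε : 0 < ε) :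
    (∃ x : EuclideanSpace ℝ (Fin n), ∃ y : EuclideanSpace ℝ (Fin n),
      ‖x‖ < 1 ∧ ‖y‖ < 1 ∧ x ≠ y ∧
        dist x y / (dist x y + c * (2 - ‖x‖ - ‖y‖)) <
          (min (1 / (2 * c)) (1 / (1 + c)) + ε) *
            (dist x y / Real.sqrt (dist x y ^ 2 + (1 - ‖x‖ ^ 2) * (1 - ‖y‖ ^ 2)))) ∧
    (∃ x : EuclideanSpace ℝ (Fin n), ∃ y : EuclideanSpace ℝ (Fin n),
      ‖x‖ < 1 ∧ ‖y‖ < 1 ∧ x ≠ y ∧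
        dist x y / (dist x y + c * (2 - ‖x‖ - ‖y‖)) >
          (max 1 (1 / c) - ε) *
            (dist x y / Real.sqrt (dist x y ^ 2 + (1 - ‖x‖ ^ 2) * (1 - ‖y‖ ^ 2)))) := by
  have : NeZero n := ⟨by lia⟩
  exact stmt14_general (EuclideanSpace ℝ (Fin n)) hc hε
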